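/- arXiv:1808.02759 — 2 statements merged into one kernel-verified Lean document; each statement's English description precedes it below -/
import Mathlib

section
/- Let λ^f, λ^s ∈ ℂ, H > 0, z^f := Hλ^f, z^s := Hλ^s, and y_n ∈ ℂ. Suppose v_1 : ℝ → ℂ satisfies v_1(0) = y_n and v_1'(θ) = (1/2)λ^f·v_1(θ) + (1/2)λ^s·y_n for all θ ∈ [0,H]; set Y_2 := v_1(H). Suppose v_2 : ℝ → ℂ satisfies v_2(0) = Y_2 and v_2'(θ) = (1/2)λ^f·v_2(θ) − (1/2)λ^s·y_n + λ^s·Y_2 for all θ ∈ [0,H]; set y_{n+1} := v_2(H). Then y_{n+1} = [ φ_0(z^f) + ( (3/2)·φ_0(z^f/2) − 1/2 )·φ_1(z^f/2)·z^s + (1/2)·φ_1(z^f/2)^2·(z^s)^2 ]·y_n. (This is the stability function of the explicit midpoint MRI-GARK scheme on the test problem y' = λ^f y + λ^s y.) -/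
/-- The `φ` functions: `φ_0(z) = e^z` and, for `k ≥ 1`,
`φ_k(z) = ∫_0^1 e^{z(1−t)} t^{k−1} dt`. -/
noncomputable def phi : ℕ → ℂ → ℂ
  | 0, z => Complex.exp z
  | (k + 1), z => ∫ t in (0:ℝ)..1, Complex.exp (z * (1 - (t : ℂ))) * (t : ℂ) ^ k

/-!
On each stage the fast variable solves a linear equation `v' = μ v + c` with constant forcing.
Multiplying by the integrating factor `e^{μ(H - t)}` and integrating over `[0, H]` gives
`v(H) = φ_0(Hμ) v(0) + H φ_1(Hμ) c`. With `μ = λᶠ/2` both stages involve only `φ_0(zᶠ/2)` and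
`φ_1(zᶠ/2)`; composing the two stage maps and using `φ_0(zᶠ/2)² = φ_0(zᶠ)` gives the stability
function.
-/

theorem phi_zero_add (z w : ℂ) : phi 0 (z + w) = phi 0 z * phi 0 w :=
  Complex.exp_add z w

theorem integral_exp_mul_sub_mul_pow (μ : ℂ) (H : ℝ) (k : ℕ) :
    ∫ t in (0 : ℝ)..H, Complex.exp (μ * (H - t)) * (t : ℂ) ^ k =
      H ^ (k + 1) * phi (k + 1) (H * μ) := by
  have rescale := intervalIntegral.smul_integral_comp_mul_left (a := 0) (b := 1)
    (fun t : ℝ => Complex.exp (μ * (H - t)) * (t : ℂ) ^ k) H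
  rw [mul_zero, mul_one, Complex.real_smul] at rescale
  have scaled_integrand (t : ℝ) : Complex.exp (μ * (H - (H * t : ℝ))) * ((H * t : ℝ) : ℂ) ^ k =
      H ^ k * (Complex.exp (H * μ * (1 - t)) * (t : ℂ) ^ k) := by
    rw [Complex.ofReal_mul, mul_pow, mul_left_comm]
    congr 3
    ring
  simp only [← rescale, scaled_integrand, intervalIntegral.integral_const_mul, phi, pow_succ',
    mul_assoc]

section LinearODE

variable {E : Type*} [NormedAddCommGroup E] [NormedSpace ℂ E] {μ : ℂ} {v : ℝ → E}

theorem hasDerivWithinAt_exp_mul_sub_smul {w : E} {s : Set ℝ} {t : ℝ} (b : ℝ)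
    (hv : HasDerivWithinAt v (μ • v t + w) s t) :
    HasDerivWithinAt (fun t : ℝ => Complex.exp (μ * (b - t)) • v t)
      (Complex.exp (μ * (b - t)) • w) s t := by
  have hexp : HasDerivWithinAt (fun t : ℝ => Complex.exp (μ * (b - t)))
      (Complex.exp (μ * (b - t)) * (μ * -1)) s t :=
    ((Complex.ofRealCLM.hasDerivAt.const_sub (b : ℂ)).const_mul μ).cexp.hasDerivWithinAt
  refine (hexp.smul hv).congr_deriv ?_
  module

variable [CompleteSpace E]

theorem eq_exp_smul_add_integral_of_hasDerivWithinAt {a b : ℝ} {g : ℝ → E}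
    (hg : IntervalIntegrable g MeasureTheory.volume a b)
    (hv : ∀ t ∈ Set.uIcc a b, HasDerivWithinAt v (μ • v t + g t) (Set.uIcc a b) t) :
    v b = Complex.exp (μ * (b - a)) • v a + ∫ t in a..b, Complex.exp (μ * (b - t)) • g t := by
  have hderiv := fun t ht => hasDerivWithinAt_exp_mul_sub_smul b (hv t ht)
  have hint : IntervalIntegrable (fun t : ℝ => Complex.exp (μ * (b - t)) • g t)
      MeasureTheory.volume a b :=
    hg.continuousOn_smul (by fun_prop)
  have ftc := intervalIntegral.integral_eq_sub_of_hasDeriv_right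
    (fun t ht => (hderiv t ht).continuousWithinAt)
    (fun t ht => ((hderiv t (Set.Ioo_subset_Icc_self ht)).hasDerivAt
      (Icc_mem_nhds ht.1 ht.2)).hasDerivWithinAt) hint
  rw [ftc, sub_self, mul_zero, Complex.exp_zero, one_smul, add_sub_cancel]

theorem eq_phi_smul_add_of_hasDerivWithinAt_const {H : ℝ} {c : E}
    (hv : ∀ t ∈ Set.uIcc 0 H, HasDerivWithinAt v (μ • v t + c) (Set.uIcc 0 H) t) :
    v H = phi 0 (H * μ) • v 0 + (H * phi 1 (H * μ)) • c := by
  have hphi : ∫ t in (0 : ℝ)..H, Complex.exp (μ * (H - t)) = H * phi 1 (H * μ) := by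
    simpa only [pow_zero, mul_one, zero_add, pow_one] using integral_exp_mul_sub_mul_pow μ H 0
  rw [eq_exp_smul_add_integral_of_hasDerivWithinAt intervalIntegrable_const hv,
    intervalIntegral.integral_smul_const, hphi, Complex.ofReal_zero, sub_zero, mul_comm μ, phi]

end LinearODE

theorem stmt5_general {E : Type*} [NormedAddCommGroup E] [NormedSpace ℂ E] [CompleteSpace E]
    (lamf lams : ℂ) (H : ℝ)
    (zf zs : ℂ) (hzf : zf = (H : ℂ) * lamf) (hzs : zs = (H : ℂ) * lams)
    (yn : E) (v1 v2 : ℝ → E)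
    (hv10 : v1 0 = yn)
    (hv1 : ∀ θ ∈ Set.uIcc 0 H,
      HasDerivWithinAt v1 (((1 / 2) * lamf) • v1 θ + ((1 / 2) * lams) • yn) (Set.uIcc 0 H) θ)
    (Y2 : E) (hY2 : Y2 = v1 H)
    (hv20 : v2 0 = Y2)
    (hv2 : ∀ θ ∈ Set.uIcc 0 H,
      HasDerivWithinAt v2 (((1 / 2) * lamf) • v2 θ - ((1 / 2) * lams) • yn + lams • Y2)
        (Set.uIcc 0 H) θ)
    (ynp1 : E) (hynp1 : ynp1 = v2 H) :
    ynp1 = (phi 0 zf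
      + ((3 / 2) * phi 0 (zf / 2) - 1 / 2) * phi 1 (zf / 2) * zs
      + (1 / 2) * phi 1 (zf / 2) ^ 2 * zs ^ 2) • yn := by
  have hz : (H : ℂ) * ((1 / 2) * lamf) = zf / 2 := by rw [hzf]; ring
  have stage1 : Y2 = phi 0 (zf / 2) • yn + (H * phi 1 (zf / 2)) • ((1 / 2) * lams) • yn := by
    rw [hY2, eq_phi_smul_add_of_hasDerivWithinAt_const hv1, hv10, hz]
  have stage2 : ynp1 = phi 0 (zf / 2) • Y2 +
      (H * phi 1 (zf / 2)) • (lams • Y2 - ((1 / 2) * lams) • yn) := by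
    simp only [sub_add_eq_add_sub, add_sub_assoc] at hv2
    rw [hynp1, eq_phi_smul_add_of_hasDerivWithinAt_const hv2, hv20, hz]
  have hphi : phi 0 zf = phi 0 (zf / 2) * phi 0 (zf / 2) := by
    rw [← phi_zero_add, add_halves]
  rw [stage2, stage1, hphi, hzs]
  module

/-- Stability function of the explicit midpoint MRI-GARK scheme on the test
problem `y' = λᶠ y + λˢ y`: with `zᶠ = Hλᶠ`, `zˢ = Hλˢ`, if
`v₁(0) = yₙ`, `v₁'(θ) = (1/2)λᶠ v₁(θ) + (1/2)λˢ yₙ` on `[0,H]`, `Y₂ = v₁(H)`,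
`v₂(0) = Y₂`, `v₂'(θ) = (1/2)λᶠ v₂(θ) − (1/2)λˢ yₙ + λˢ Y₂` on `[0,H]`, and
`yₙ₊₁ = v₂(H)`, then
`yₙ₊₁ = (φ_0(zᶠ) + ((3/2)φ_0(zᶠ/2) − 1/2)φ_1(zᶠ/2) zˢ + (1/2)φ_1(zᶠ/2)² (zˢ)²) yₙ`. -/
theorem stmt5 (lamf lams : ℂ) (H : ℝ) (hH : 0 < H)
    (zf zs : ℂ) (hzf : zf = (H : ℂ) * lamf) (hzs : zs = (H : ℂ) * lams)
    (yn : ℂ) (v1 v2 : ℝ → ℂ)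
    (hv10 : v1 0 = yn)
    (hv1 : ∀ θ ∈ Set.Icc (0:ℝ) H,
      HasDerivAt v1 ((1 / 2) * lamf * v1 θ + (1 / 2) * lams * yn) θ)
    (Y2 : ℂ) (hY2 : Y2 = v1 H)
    (hv20 : v2 0 = Y2)
    (hv2 : ∀ θ ∈ Set.Icc (0:ℝ) H,
      HasDerivAt v2 ((1 / 2) * lamf * v2 θ - (1 / 2) * lams * yn + lams * Y2) θ)
    (ynp1 : ℂ) (hynp1 : ynp1 = v2 H) :
    ynp1 = (phi 0 zf
      + ((3 / 2) * phi 0 (zf / 2) - 1 / 2) * phi 1 (zf / 2) * zs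
      + (1 / 2) * phi 1 (zf / 2) ^ 2 * zs ^ 2) * yn := by
  rw [← Set.uIcc_of_le hH.le] at hv1 hv2
  exact stmt5_general lamf lams H zf zs hzf hzs yn v1 v2
    hv10 (fun θ hθ => (hv1 θ hθ).hasDerivWithinAt) Y2 hY2
    hv20 (fun θ hθ => (hv2 θ hθ).hasDerivWithinAt) ynp1 hynp1
end

section
/- Let b, d ∈ ℝ^m with b·1_m = 1, b·d = 1/2 and b·(d∘d) = 1/3; let c_1, …, c_{s+1} be reals with c_1 = 0, Δc_i := c_{i+1} − c_i; and let β ∈ ℝ^s satisfy Σ_{ℓ=1}^{s} β_ℓ c_ℓ³ = 1/4. Then Σ_{i=1}^{s} Δc_i·( Σ_{ℓ=i+1}^{s} β_ℓ )·( b·(c_i·1_m + Δc_i·d)^{∘2} ) = 1/12. (This shows the MR-GARK fourth-order coupling condition b^{s T} A^{sf} (c^{ff})^{∘2} = 1/12 is automatically satisfied for MRI-GARK schemes.) -/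
/-!
If `b`, `d` integrate `t ^ k` exactly over `[0, 1]` for `k ≤ n`, then
`Δc_i * ∑ r, b_r (c_i + Δc_i d_r) ^ n` is the integral of `t ^ n` from `c_i` to `c_{i+1}`, that is,
the increment of `t ^ (n + 1) / (n + 1)`. After exchanging the sums over `i < ℓ`, the increments up
to `c_ℓ` telescope, and the coupling sum collapses to the order condition on `β`. The theorem is
the case `n = 2`.
-/

theorem sum_Iio_succ_sub_castSucc {G : Type*} [AddCommGroup G] {s : ℕ} (f : Fin (s + 1) → G)
    (ℓ : Fin s) : ∑ i ∈ Finset.Iio ℓ, (f i.succ - f i.castSucc) = f ℓ.castSucc - f 0 := by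
  have h := Fin.sum_Iic_sub ℓ f
  rw [← Finset.Iio_insert, Finset.sum_insert Finset.notMem_Iio_self] at h
  rw [eq_sub_of_add_eq' h, sub_sub_sub_cancel_left]

theorem sum_succ_sub_castSucc_mul_sum_gt {R : Type*} [NonUnitalNonAssocRing R] {s : ℕ}
    (f : Fin (s + 1) → R) (β : Fin s → R) :
    ∑ i, (f i.succ - f i.castSucc) * ∑ ℓ with i < ℓ, β ℓ
      = ∑ ℓ, (f ℓ.castSucc - f 0) * β ℓ := by
  simp_rw [← sum_Iio_succ_sub_castSucc, Finset.mul_sum, Finset.sum_mul]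
  exact Finset.sum_comm' (by simp)

section Quadrature

variable {R ι : Type*} [CommRing R] [Fintype ι]

/-- The quadrature rule with weights `b` and nodes `d` integrates `t ^ k` exactly over `[0, 1]` for
all `k < p` (Butcher's simplifying assumption `B(p)`). The denominators `k + 1` are cleared so that
the condition makes sense over any commutative ring. -/
def IsQuadratureOfOrder (b d : ι → R) (p : ℕ) : Prop :=
  ∀ k < p, (k + 1) * ∑ r, b r * d r ^ k = 1

theorem isQuadratureOfOrder_three_iff {K : Type*} [Field K] [NeZero (2 : K)] [NeZero (3 : K)]
    {b d : ι → K} :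
    IsQuadratureOfOrder b d 3 ↔
      ∑ r, b r = 1 ∧ ∑ r, b r * d r = 1 / 2 ∧ ∑ r, b r * d r ^ 2 = 1 / 3 := by
  simp only [IsQuadratureOfOrder, Nat.forall_lt_succ_right, eq_div_iff (two_ne_zero' K),
    eq_div_iff (three_ne_zero' K)]
  norm_num [mul_comm, and_assoc]

theorem IsQuadratureOfOrder.add_one_mul_sum_add_mul_pow {b d : ι → R} {n : ℕ}
    (hbd : IsQuadratureOfOrder b d (n + 1)) (x h : R) :
    (n + 1) * (h * ∑ r, b r * (x + h * d r) ^ n) = (x + h) ^ (n + 1) - x ^ (n + 1) := by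
  have expand : ∑ r, b r * (x + h * d r) ^ n = ∑ k ∈ Finset.range (n + 1),
      h ^ k * x ^ (n - k) * n.choose k * ∑ r, b r * d r ^ k := by
    simp_rw [add_comm x, add_pow, Finset.mul_sum]
    rw [Finset.sum_comm]
    exact Finset.sum_congr rfl fun k _ => Finset.sum_congr rfl fun r _ => by ring
  have increment : (x + h) ^ (n + 1) - x ^ (n + 1) = ∑ k ∈ Finset.range (n + 1),
      h ^ (k + 1) * x ^ (n - k) * (n + 1).choose (k + 1) := by
    simp [add_comm x, add_pow _ _ (n + 1), Finset.sum_range_succ' _ (n + 1)]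
  have absorb (k : ℕ) : (n + 1 : R) * n.choose k = (n + 1).choose (k + 1) * (k + 1) := by
    exact_mod_cast congrArg (Nat.cast (R := R)) (Nat.add_one_mul_choose_eq n k)
  rw [expand, increment, Finset.mul_sum, Finset.mul_sum]
  refine Finset.sum_congr rfl fun k hk => ?_
  linear_combination h ^ (k + 1) * x ^ (n - k) * (∑ r, b r * d r ^ k) * absorb k
    + h ^ (k + 1) * x ^ (n - k) * (n + 1).choose (k + 1) * hbd k (Finset.mem_range.1 hk)

theorem stmt12_general {b d : ι → R} {n s : ℕ} (hbd : IsQuadratureOfOrder b d (n + 1))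
    (c : Fin (s + 1) → R) (Δc : Fin s → R) (hΔc : ∀ i, Δc i = c i.succ - c i.castSucc)
    (β : Fin s → R) :
    (n + 1) * ∑ i, Δc i * (∑ ℓ with i < ℓ, β ℓ) * ∑ r, b r * (c i.castSucc + Δc i * d r) ^ n
      = ∑ ℓ, β ℓ * (c ℓ.castSucc ^ (n + 1) - c 0 ^ (n + 1)) := by
  have increment (i : Fin s) :
      (n + 1) * (Δc i * ∑ r, b r * (c i.castSucc + Δc i * d r) ^ n)
        = c i.succ ^ (n + 1) - c i.castSucc ^ (n + 1) := by
    rw [hbd.add_one_mul_sum_add_mul_pow, hΔc, add_sub_cancel]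
  calc (n + 1) * ∑ i, Δc i * (∑ ℓ with i < ℓ, β ℓ) * ∑ r, b r * (c i.castSucc + Δc i * d r) ^ n
      = ∑ i, (c i.succ ^ (n + 1) - c i.castSucc ^ (n + 1)) * ∑ ℓ with i < ℓ, β ℓ := by
        rw [Finset.mul_sum]
        exact Finset.sum_congr rfl fun i _ => by rw [← increment]; ring
    _ = ∑ ℓ, (c ℓ.castSucc ^ (n + 1) - c 0 ^ (n + 1)) * β ℓ :=
        sum_succ_sub_castSucc_mul_sum_gt (fun j => c j ^ (n + 1)) β
    _ = ∑ ℓ, β ℓ * (c ℓ.castSucc ^ (n + 1) - c 0 ^ (n + 1)) := by simp_rw [mul_comm]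

end Quadrature

/-- Fourth-order MR-GARK coupling condition `b^{sT} A^{sf} (c^{ff})^{∘2} = 1/12`
holds automatically for MRI-GARK schemes: with `b·1 = 1`, `b·d = 1/2`,
`b·(d∘d) = 1/3`, `c_1 = 0`, `Δc_i = c_{i+1} − c_i`, and slow weights `β` with
`Σ_ℓ β_ℓ c_ℓ³ = 1/4`, one has
`Σ_i Δc_i (Σ_{ℓ=i+1}^{s} β_ℓ)(b·(c_i·1 + Δc_i·d)^{∘2}) = 1/12`. -/
theorem stmt12 {m s : ℕ} (b d : Fin m → ℝ)
    (hb1 : ∑ ℓ, b ℓ = 1) (hbd : ∑ ℓ, b ℓ * d ℓ = 1 / 2)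
    (hbd2 : ∑ ℓ, b ℓ * (d ℓ * d ℓ) = 1 / 3)
    (c : Fin (s + 1) → ℝ) (hc0 : c 0 = 0)
    (Δc : Fin s → ℝ) (hΔc : ∀ i, Δc i = c i.succ - c i.castSucc)
    (β : Fin s → ℝ) (hβ : ∑ ℓ : Fin s, β ℓ * (c ℓ.castSucc) ^ 3 = 1 / 4) :
    ∑ i : Fin s, Δc i * (∑ ℓ ∈ Finset.univ.filter (fun ℓ : Fin s => i < ℓ), β ℓ)
        * (∑ r, b r * (c i.castSucc + Δc i * d r) ^ 2) = 1 / 12 := by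
  have h := stmt12_general (n := 2)
    (isQuadratureOfOrder_three_iff.2 ⟨hb1, hbd, by simpa only [sq] using hbd2⟩) c Δc hΔc β
  simp only [Nat.cast_ofNat, Nat.reduceAdd, hc0, zero_pow three_ne_zero, sub_zero, hβ] at h
  linarith
end
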